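/- (Theorem 2, convergence without the channel-statistics condition.) In the over-the-air federated PG model, suppose 0 < α ≤ 1/(m_h·L), and set Λ' = M·(N+1)·m_h² + σ_h². Then for every integer K ≥ 1, (1/K)·Σ_{k=0}^{K−1} E[‖∇J(θ^k)‖²] ≤ 2·M·N·m_h·(J(θ^0) − J*)/(α·K·Λ') + M·σ_h²·V²/Λ' + σ_h²·V²/Λ' + M·σ̄²/(N·Λ'). -/

import Mathlib

open MeasureTheory ProbabilityTheory Gradient

/-- The family `{h_i}_i ∪ {X_{i,m}}_{i,m} ∪ {n}` combined into a single family of random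
variables with common codomain `ℝ × ℝ^d`; each member generates exactly the σ-algebra of the
corresponding original random variable, so (conditional) mutual independence of this family is
equivalent to (conditional) mutual independence of the original family. -/
def otaFam {d N M : ℕ} {Ω : Type*}
    (h : Fin N → Ω → ℝ) (X : Fin N → Fin M → Ω → EuclideanSpace ℝ (Fin d))
    (n : Ω → EuclideanSpace ℝ (Fin d)) :
    Fin N ⊕ (Fin N × Fin M) ⊕ Unit → Ω → ℝ × EuclideanSpace ℝ (Fin d)
  | Sum.inl i => fun ω => (h i ω, 0)
  | Sum.inr (Sum.inl (i, m)) => fun ω => (0, X i m ω)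
  | Sum.inr (Sum.inr _) => fun ω => (0, n ω)

/-!
Conditionally on the past, the received signal has mean `N m_h ∇J(θ)`, and independence of the
agents splits its second moment into `N` diagonal terms, each at most `σ_h² V²`, the noise, and
`N (N - 1)` off-diagonal terms equal to `m_h² ‖∇J(θ)‖²`. Keeping the latter exact in the descent
lemma and using `α m_h L ≤ 1` gives, after telescoping, a bound on
`(N + 1) m_h² ∑ₖ E‖∇J(θᵏ)‖²`. The other estimate is Jensen's `E‖∇J(θᵏ)‖² ≤ V²`. The theorem is the
combination of the two with weights `M` and `σ_h²`; averaging over the batch enters only through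
the fact that it does not increase the second moment.
-/

theorem hasDerivAt_comp_add_smul {E : Type*} [NormedAddCommGroup E] [InnerProductSpace ℝ E]
    [CompleteSpace E] {J : E → ℝ} (hJ : Differentiable ℝ J) (x w : E) (t : ℝ) :
    HasDerivAt (fun s : ℝ ↦ J (x + s • w)) (inner ℝ (∇ J (x + t • w)) w) t := by
  have hline : HasDerivAt (fun s : ℝ ↦ x + s • w) w t := by
    simpa using ((hasDerivAt_id t).smul_const w).const_add x
  exact (hJ (x + t • w)).hasGradientAt.hasFDerivAt.comp_hasDerivAt t hline

theorem le_add_inner_gradient_add_of_lipschitz {E : Type*} [NormedAddCommGroup E]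
    [InnerProductSpace ℝ E] [CompleteSpace E] {J : E → ℝ} {L : ℝ} (hJ : Differentiable ℝ J)
    (hLip : ∀ x y, ‖∇ J x - ∇ J y‖ ≤ L * ‖x - y‖) (x w : E) :
    J (x + w) ≤ J x + inner ℝ (∇ J x) w + L / 2 * ‖w‖ ^ 2 := by
  have hgrad : ∀ t, 0 ≤ t →
      inner ℝ (∇ J (x + t • w)) w ≤ inner ℝ (∇ J x) w + L / 2 * ‖w‖ ^ 2 * (2 * t) := by
    intro t ht
    have hdiff : ‖∇ J (x + t • w) - ∇ J x‖ ≤ L * (t * ‖w‖) := by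
      simpa [norm_smul, abs_of_nonneg ht] using hLip (x + t • w) x
    calc inner ℝ (∇ J (x + t • w)) w
        = inner ℝ (∇ J x) w + inner ℝ (∇ J (x + t • w) - ∇ J x) w := by rw [inner_sub_left]; ring
      _ ≤ inner ℝ (∇ J x) w + L * (t * ‖w‖) * ‖w‖ := by
        gcongr
        exact (real_inner_le_norm _ _).trans (by gcongr)
      _ = inner ℝ (∇ J x) w + L / 2 * ‖w‖ ^ 2 * (2 * t) := by ring
  have hmajor : ∀ t : ℝ, HasDerivAt
      (fun s : ℝ ↦ J x + s * inner ℝ (∇ J x) w + L / 2 * ‖w‖ ^ 2 * s ^ 2)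
      (inner ℝ (∇ J x) w + L / 2 * ‖w‖ ^ 2 * (2 * t)) t := fun t ↦ by
    simpa using (((hasDerivAt_id t).mul_const (inner ℝ (∇ J x) w)).const_add (J x)).fun_add
      ((hasDerivAt_pow 2 t).const_mul (L / 2 * ‖w‖ ^ 2))
  have hJw := hasDerivAt_comp_add_smul hJ x w
  simpa using image_le_of_deriv_right_le_deriv_boundary (a := 0) (b := 1)
    (fun t _ ↦ (hJw t).continuousAt.continuousWithinAt) (fun t _ ↦ (hJw t).hasDerivWithinAt)
    (by simp) (fun t _ ↦ (hmajor t).continuousAt.continuousWithinAt)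
    (fun t _ ↦ (hmajor t).hasDerivWithinAt) (fun t ht ↦ hgrad t ht.1)
    (Set.right_mem_Icc.2 zero_le_one)

theorem condExp_comp_of_indep {Ω β F : Type*} [MeasurableSpace β] [NormedAddCommGroup F]
    [NormedSpace ℝ F] [CompleteSpace F] {m mΩ : MeasurableSpace Ω} {μ : Measure Ω} (hm : m ≤ mΩ)
    [SigmaFinite (μ.trim hm)] {f : Ω → β} {φ : β → F} (hf : AEMeasurable f μ)
    (hφ : StronglyMeasurable φ) (hfm : Indep (MeasurableSpace.comap f inferInstance) m μ) :
    μ[fun ω ↦ φ (f ω) | m] =ᵐ[μ] fun _ ↦ ∫ ω, φ (f ω) ∂μ := by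
  have hmk : Indep (MeasurableSpace.comap (hf.mk f) inferInstance) m μ := by
    rw [← MeasurableSpace.comap_id (m := m)] at hfm ⊢
    exact @IndepFun.congr Ω β Ω mΩ μ f id _ m _ _ hfm hf.ae_eq_mk .rfl
  have hφf : (fun ω ↦ φ (f ω)) =ᵐ[μ] fun ω ↦ φ (hf.mk f ω) := hf.ae_eq_mk.fun_comp φ
  refine (condExp_congr_ae hφf).trans ?_
  rw [integral_congr_ae hφf]
  exact condExp_indep_eq hf.measurable_mk.comap_le hm
    (hφ.comp_measurable (comap_measurable _)) hmk

theorem condExp_sum_apply {Ω F ι : Type*} [NormedAddCommGroup F] [NormedSpace ℝ F]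
    [CompleteSpace F] {m mΩ : MeasurableSpace Ω} {μ : Measure Ω} {s : Finset ι} {f : ι → Ω → F}
    (hf : ∀ i ∈ s, Integrable (f i) μ) :
    μ[fun ω ↦ ∑ i ∈ s, f i ω | m] =ᵐ[μ] fun ω ↦ ∑ i ∈ s, (μ[f i | m]) ω := by
  simpa only [Finset.sum_fn] using condExp_finsetSum hf m

theorem condExp_mul_condExp_mem_Icc {Ω : Type*} {m mΩ : MeasurableSpace Ω} {μ : Measure Ω}
    {f g : Ω → ℝ} {a b : ℝ} (hf0 : 0 ≤ᵐ[μ] f) (hg0 : 0 ≤ᵐ[μ] g)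
    (hfa : ∀ᵐ ω ∂μ, (μ[f | m]) ω ≤ a) (hgb : ∀ᵐ ω ∂μ, (μ[g | m]) ω ≤ b) :
    ∀ᵐ ω ∂μ, (μ[f | m]) ω * (μ[g | m]) ω ∈ Set.Icc 0 (a * b) := by
  filter_upwards [hfa, hgb, condExp_nonneg (m := m) hf0, condExp_nonneg (m := m) hg0]
    with ω hfω hgω hf0ω hg0ω
  exact ⟨mul_nonneg hf0ω hg0ω, mul_le_mul hfω hgω hg0ω (hf0ω.trans hfω)⟩

section CondIndep

variable {Ω : Type*} {m mΩ : MeasurableSpace Ω} [StandardBorelSpace Ω] {hm : m ≤ mΩ}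
  {μ : Measure Ω} [IsFiniteMeasure μ]

theorem ae_trim_ae_condExpKernel_of_ae (hm : m ≤ mΩ) {p : Ω → Prop} (hp : ∀ᵐ ω ∂μ, p ω) :
    ∀ᵐ ω ∂μ.trim hm, ∀ᵐ ω' ∂condExpKernel μ m ω, p ω' :=
  Measure.ae_ae_of_ae_comp (by rwa [condExpKernel_comp_trim hm])

theorem ae_trim_integrable_condExpKernel {F : Type*} [NormedAddCommGroup F] (hm : m ≤ mΩ)
    {f : Ω → F} (hf : Integrable f μ) :
    ∀ᵐ ω ∂μ.trim hm, Integrable f (condExpKernel μ m ω) :=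
  Measure.ae_integrable_of_integrable_comp (by rwa [condExpKernel_comp_trim hm])

theorem ae_trim_indepFun_condExpKernel {β γ : Type*} [MeasurableSpace β] [MeasurableSpace γ]
    [MeasurableSpace.CountableOrCountablyGenerated Ω (β × γ)] {f : Ω → β} {g : Ω → γ}
    (hfg : CondIndepFun m hm f g μ) (hf : AEMeasurable f μ) (hg : AEMeasurable g μ) :
    ∀ᵐ ω ∂μ.trim hm, IndepFun f g (condExpKernel μ m ω) := by
  have hf_mk := ae_trim_ae_condExpKernel_of_ae hm hf.ae_eq_mk
  have hg_mk := ae_trim_ae_condExpKernel_of_ae hm hg.ae_eq_mk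
  have hmk : CondIndepFun m hm (hf.mk f) (hg.mk g) μ := Kernel.IndepFun.congr' hfg hf_mk hg_mk
  have hmap := (condIndepFun_iff_map_prod_eq_prod_map_map hf.measurable_mk hg.measurable_mk).1 hmk
  filter_upwards [hf_mk, hg_mk, hmap] with ω hfω hgω hω
  rw [Kernel.map_apply _ (hf.measurable_mk.prodMk hg.measurable_mk), Kernel.prod_apply,
    Kernel.map_apply _ hf.measurable_mk, Kernel.map_apply _ hg.measurable_mk] at hω
  have hindep : IndepFun (hf.mk f) (hg.mk g) (condExpKernel μ m ω) :=
    (indepFun_iff_map_prod_eq_prod_map_map hf.measurable_mk.aemeasurable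
      hg.measurable_mk.aemeasurable).2 hω
  exact hindep.congr (Filter.EventuallyEq.symm hfω) (Filter.EventuallyEq.symm hgω)

theorem condExp_bilin_of_condIndepFun {E F G : Type*}
    [NormedAddCommGroup E] [NormedSpace ℝ E] [CompleteSpace E] [MeasurableSpace E] [BorelSpace E]
    [SecondCountableTopology E]
    [NormedAddCommGroup F] [NormedSpace ℝ F] [CompleteSpace F] [MeasurableSpace F] [BorelSpace F]
    [SecondCountableTopology F]
    [NormedAddCommGroup G] [NormedSpace ℝ G] [CompleteSpace G]
    (B : E →L[ℝ] F →L[ℝ] G) {f : Ω → E} {g : Ω → F} (hfg : CondIndepFun m hm f g μ)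
    (hf : Integrable f μ) (hg : Integrable g μ) (hB : Integrable (fun ω ↦ B (f ω) (g ω)) μ) :
    μ[fun ω ↦ B (f ω) (g ω) | m] =ᵐ[μ] fun ω ↦ B (μ[f | m] ω) (μ[g | m] ω) := by
  refine ae_of_ae_trim hm ?_
  filter_upwards [ae_trim_indepFun_condExpKernel hfg hf.1.aemeasurable hg.1.aemeasurable,
    ae_trim_integrable_condExpKernel hm hf, ae_trim_integrable_condExpKernel hm hg,
    condExp_ae_eq_trim_integral_condExpKernel hm hf,
    condExp_ae_eq_trim_integral_condExpKernel hm hg,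
    condExp_ae_eq_trim_integral_condExpKernel hm hB] with ω hindep hfω hgω hfE hgE hBE
  rw [hfE, hgE, hBE, hindep.integral_bilin hfω hgω B]

theorem integrable_mul_of_condIndepFun {f g : Ω → ℝ} (hfg : CondIndepFun m hm f g μ)
    (hf : Integrable f μ) (hg : Integrable g μ)
    (hfg_int : Integrable (fun ω ↦ (μ[fun ω' ↦ |f ω'| | m]) ω * (μ[fun ω' ↦ |g ω'| | m]) ω) μ) :
    Integrable (fun ω ↦ f ω * g ω) μ := by
  have hindep := ae_trim_indepFun_condExpKernel hfg hf.1.aemeasurable hg.1.aemeasurable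
  have hfκ := ae_trim_integrable_condExpKernel hm hf
  have hgκ := ae_trim_integrable_condExpKernel hm hg
  have hnorm : (fun ω ↦ ∫ ω', ‖f ω' * g ω'‖ ∂condExpKernel μ m ω) =ᵐ[μ.trim hm]
      fun ω ↦ (μ[fun ω' ↦ |f ω'| | m]) ω * (μ[fun ω' ↦ |g ω'| | m]) ω := by
    filter_upwards [hindep, condExp_ae_eq_trim_integral_condExpKernel hm hf.abs,
      condExp_ae_eq_trim_integral_condExpKernel hm hg.abs, hfκ, hgκ] with ω hω hfω hgω hfi hgi
    rw [hfω, hgω]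
    simp only [Real.norm_eq_abs, abs_mul]
    exact (hω.comp measurable_abs measurable_abs).integral_fun_mul_eq_mul_integral
      hfi.abs.1 hgi.abs.1
  rw [← condExpKernel_comp_trim (μ := μ) hm, Measure.integrable_comp_iff
    (by rw [condExpKernel_comp_trim hm]; exact hf.1.mul hg.1)]
  refine ⟨?_, ?_⟩
  · filter_upwards [hindep, hfκ, hgκ] with ω hω hfω hgω using hω.integrable_mul hfω hgω
  · exact (integrable_congr hnorm).2 (hfg_int.trim hm
      (stronglyMeasurable_condExp.mul stronglyMeasurable_condExp))

theorem integrable_mul_of_condIndepFun_of_le {f g : Ω → ℝ} {a b : ℝ}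
    (hfg : CondIndepFun m hm f g μ) (hf0 : 0 ≤ᵐ[μ] f) (hg0 : 0 ≤ᵐ[μ] g)
    (hf : Integrable f μ) (hg : Integrable g μ)
    (hfa : ∀ᵐ ω ∂μ, (μ[f | m]) ω ≤ a) (hgb : ∀ᵐ ω ∂μ, (μ[g | m]) ω ≤ b) :
    Integrable (fun ω ↦ f ω * g ω) μ := by
  refine integrable_mul_of_condIndepFun hfg hf hg ?_
  refine (Integrable.of_mem_Icc 0 (a * b) ?_
    (condExp_mul_condExp_mem_Icc hf0 hg0 hfa hgb)).congr ?_
  · exact ((stronglyMeasurable_condExp.mono hm).measurable.mul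
      (stronglyMeasurable_condExp.mono hm).measurable).aemeasurable
  · have habs : ∀ {f : Ω → ℝ}, 0 ≤ᵐ[μ] f → f =ᵐ[μ] fun ω ↦ |f ω| :=
      fun hf ↦ hf.mono fun ω hω ↦ (abs_of_nonneg hω).symm
    exact (condExp_congr_ae (habs hf0)).mul (condExp_congr_ae (habs hg0))

theorem integral_mul_le_of_condIndepFun {μ : Measure Ω} [IsProbabilityMeasure μ] {f g : Ω → ℝ}
    {a b : ℝ} (hfg : CondIndepFun m hm f g μ) (hf0 : 0 ≤ᵐ[μ] f) (hg0 : 0 ≤ᵐ[μ] g)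
    (hf : Integrable f μ) (hg : Integrable g μ)
    (hfa : ∀ᵐ ω ∂μ, (μ[f | m]) ω ≤ a) (hgb : ∀ᵐ ω ∂μ, (μ[g | m]) ω ≤ b) :
    ∫ ω, f ω * g ω ∂μ ≤ a * b := by
  have hmul := condExp_bilin_of_condIndepFun (.mul ℝ ℝ) hfg hf hg
    (integrable_mul_of_condIndepFun_of_le hfg hf0 hg0 hf hg hfa hgb)
  calc ∫ ω, f ω * g ω ∂μ = ∫ ω, (μ[fun ω' ↦ f ω' * g ω' | m]) ω ∂μ := (integral_condExp hm).symm
    _ ≤ ∫ _, a * b ∂μ := by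
        refine integral_mono_ae integrable_condExp (integrable_const _) ?_
        filter_upwards [hmul, condExp_mul_condExp_mem_Icc hf0 hg0 hfa hgb] with ω hω hle
        exact hω.trans_le hle.2
    _ = a * b := by simp

end CondIndep

section SquareIntegrable

variable {Ω E : Type*} {mΩ : MeasurableSpace Ω} {μ : Measure Ω} [NormedAddCommGroup E]
  [InnerProductSpace ℝ E]

theorem integrable_inner_of_memLp_two {f g : Ω → E} (hf : MemLp f 2 μ) (hg : MemLp g 2 μ) :
    Integrable (fun ω ↦ inner ℝ (f ω) (g ω)) μ :=
  (hf.norm.integrable_mul hg.norm).mono' (hf.1.inner hg.1)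
    (.of_forall fun _ ↦ norm_inner_le_norm _ _)

theorem integral_norm_sum_sq {ι : Type*} (s : Finset ι) {Y : ι → Ω → E}
    (hY : ∀ i ∈ s, MemLp (Y i) 2 μ) :
    ∫ ω, ‖∑ i ∈ s, Y i ω‖ ^ 2 ∂μ = ∑ i ∈ s, ∑ j ∈ s, ∫ ω, inner ℝ (Y i ω) (Y j ω) ∂μ := by
  have hint : ∀ i ∈ s, ∀ j ∈ s, Integrable (fun ω ↦ inner ℝ (Y i ω) (Y j ω)) μ :=
    fun i hi j hj ↦ integrable_inner_of_memLp_two (hY i hi) (hY j hj)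
  simp_rw [← real_inner_self_eq_norm_sq, sum_inner, inner_sum]
  rw [integral_finsetSum _ fun i hi ↦ integrable_finsetSum _ (hint i hi)]
  exact Finset.sum_congr rfl fun i hi ↦ integral_finsetSum _ (hint i hi)

theorem integral_norm_add_sq {f g : Ω → E} (hf : MemLp f 2 μ) (hg : MemLp g 2 μ) :
    ∫ ω, ‖f ω + g ω‖ ^ 2 ∂μ
      = ∫ ω, ‖f ω‖ ^ 2 ∂μ + 2 * ∫ ω, inner ℝ (f ω) (g ω) ∂μ + ∫ ω, ‖g ω‖ ^ 2 ∂μ := by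
  have hfg := (integrable_inner_of_memLp_two hf hg).const_mul 2
  simp_rw [norm_add_sq_real]
  rw [integral_add ((hf.integrable_norm_pow two_ne_zero).fun_add hfg)
      (hg.integrable_norm_pow two_ne_zero),
    integral_add (hf.integrable_norm_pow two_ne_zero) hfg, integral_const_mul]

theorem norm_sq_condExp_le {m : MeasurableSpace Ω} [CompleteSpace E] (hm : m ≤ mΩ)
    [IsFiniteMeasure μ] {f : Ω → E} (hf : MemLp f 2 μ) :
    (fun ω ↦ ‖(μ[f | m]) ω‖ ^ 2) ≤ᵐ[μ] μ[fun ω ↦ ‖f ω‖ ^ 2 | m] :=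
  ConvexOn.map_condExp_le_univ hm (convexOn_univ_norm.pow (fun _ _ ↦ norm_nonneg _) 2)
    (by fun_prop : Continuous fun x : E ↦ ‖x‖ ^ 2).lowerSemicontinuous
    (hf.integrable one_le_two) (hf.integrable_norm_pow two_ne_zero)

end SquareIntegrable

section CondIndepSquareIntegrable

variable {Ω E : Type*} [NormedAddCommGroup E] [InnerProductSpace ℝ E] [MeasurableSpace E]
  [BorelSpace E] {m mΩ : MeasurableSpace Ω} [StandardBorelSpace Ω] {hm : m ≤ mΩ} {μ : Measure Ω}
  {a b : ℝ}

theorem integral_inner_of_condIndepFun [IsFiniteMeasure μ] [CompleteSpace E]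
    [SecondCountableTopology E] {f g : Ω → E} (hfg : CondIndepFun m hm f g μ)
    (hf : MemLp f 2 μ) (hg : MemLp g 2 μ) :
    ∫ ω, inner ℝ (f ω) (g ω) ∂μ = ∫ ω, inner ℝ ((μ[f | m]) ω) ((μ[g | m]) ω) ∂μ := by
  rw [← integral_condExp hm]
  exact integral_congr_ae (condExp_bilin_of_condIndepFun (innerSL ℝ) hfg (hf.integrable one_le_two)
    (hg.integrable one_le_two) (integrable_inner_of_memLp_two hf hg))

theorem memLp_smul_of_condIndepFun [IsFiniteMeasure μ] {f : Ω → ℝ} {g : Ω → E}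
    (hfg : CondIndepFun m hm f g μ) (hf : MemLp f 2 μ) (hg : MemLp g 2 μ)
    (hfa : ∀ᵐ ω ∂μ, (μ[fun ω' ↦ f ω' ^ 2 | m]) ω ≤ a)
    (hgb : ∀ᵐ ω ∂μ, (μ[fun ω' ↦ ‖g ω'‖ ^ 2 | m]) ω ≤ b) :
    MemLp (fun ω ↦ f ω • g ω) 2 μ := by
  have hsq : CondIndepFun m hm (fun ω ↦ f ω ^ 2) (fun ω ↦ ‖g ω‖ ^ 2) μ :=
    hfg.comp (φ := fun x ↦ x ^ 2) (ψ := fun x ↦ ‖x‖ ^ 2) (by fun_prop) (by fun_prop)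
  rw [memLp_two_iff_integrable_sq_norm (hf.1.fun_smul hg.1)]
  simpa only [norm_smul, mul_pow, Real.norm_eq_abs, sq_abs] using
    integrable_mul_of_condIndepFun_of_le hsq (.of_forall fun _ ↦ sq_nonneg _)
      (.of_forall fun _ ↦ sq_nonneg _) hf.integrable_sq (hg.integrable_norm_pow two_ne_zero) hfa hgb

theorem integral_norm_smul_sq_le_of_condIndepFun [IsProbabilityMeasure μ] {f : Ω → ℝ} {g : Ω → E}
    (hfg : CondIndepFun m hm f g μ) (hf : MemLp f 2 μ) (hg : MemLp g 2 μ)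
    (hfa : ∀ᵐ ω ∂μ, (μ[fun ω' ↦ f ω' ^ 2 | m]) ω ≤ a)
    (hgb : ∀ᵐ ω ∂μ, (μ[fun ω' ↦ ‖g ω'‖ ^ 2 | m]) ω ≤ b) :
    ∫ ω, ‖f ω • g ω‖ ^ 2 ∂μ ≤ a * b := by
  have hsq : CondIndepFun m hm (fun ω ↦ f ω ^ 2) (fun ω ↦ ‖g ω‖ ^ 2) μ :=
    hfg.comp (φ := fun x ↦ x ^ 2) (ψ := fun x ↦ ‖x‖ ^ 2) (by fun_prop) (by fun_prop)
  simpa only [norm_smul, mul_pow, Real.norm_eq_abs, sq_abs] using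
    integral_mul_le_of_condIndepFun hsq (.of_forall fun _ ↦ sq_nonneg _)
      (.of_forall fun _ ↦ sq_nonneg _) hf.integrable_sq (hg.integrable_norm_pow two_ne_zero) hfa hgb

end CondIndepSquareIntegrable

/-- The superposition `∑ i, h i • u i + n` received over the air when agent `i` transmits `u i`
through a channel with gain `h i` and the receiver adds the noise `n`. -/
def receivedSignal {ι Ω E : Type*} [Fintype ι] [AddCommMonoid E] [SMul ℝ E] (h : ι → Ω → ℝ)
    (u : ι → Ω → E) (n : Ω → E) (ω : Ω) : E :=
  ∑ i, h i ω • u i ω + n ω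

/-- One round of over-the-air aggregation, conditionally on the past `m`: agent `i` sends an
unbiased estimate `u i` of `g` through a channel with random gain `h i`, and the receiver adds the
centred noise `n`. The gains have mean `c` and second moment at most `σ`, the estimates have second
moment at most `V ^ 2`, and the noise has second moment at most `s`. Conditional independence is
required pairwise, since only second moments of the received signal are at stake. -/
structure IsOverTheAirRound {ι Ω E : Type*} [NormedAddCommGroup E] [InnerProductSpace ℝ E]
    [MeasurableSpace E] (m : MeasurableSpace Ω) {mΩ : MeasurableSpace Ω} [StandardBorelSpace Ω]
    (hm : m ≤ mΩ) (μ : Measure Ω) [IsFiniteMeasure μ] (h : ι → Ω → ℝ) (u : ι → Ω → E)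
    (n g : Ω → E) (c σ V s : ℝ) : Prop where
  memLp_channel : ∀ i, MemLp (h i) 2 μ
  memLp_estimate : ∀ i, MemLp (u i) 2 μ
  memLp_noise : MemLp n 2 μ
  condIndepFun_channel_estimate : ∀ i, CondIndepFun m hm (h i) (u i) μ
  condIndepFun_message : Pairwise fun i j ↦
    CondIndepFun m hm (fun ω ↦ h i ω • u i ω) (fun ω ↦ h j ω • u j ω) μ
  condIndepFun_message_noise : ∀ i, CondIndepFun m hm (fun ω ↦ h i ω • u i ω) n μ
  condExp_channel : ∀ i, μ[h i | m] =ᵐ[μ] fun _ ↦ c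
  condExp_channel_sq_le : ∀ i, ∀ᵐ ω ∂μ, (μ[fun ω' ↦ h i ω' ^ 2 | m]) ω ≤ σ
  condExp_estimate : ∀ i, μ[u i | m] =ᵐ[μ] g
  condExp_estimate_sq_le : ∀ i, ∀ᵐ ω ∂μ, (μ[fun ω' ↦ ‖u i ω'‖ ^ 2 | m]) ω ≤ V ^ 2
  condExp_noise : μ[n | m] =ᵐ[μ] 0
  integral_noise_sq_le : ∫ ω, ‖n ω‖ ^ 2 ∂μ ≤ s

namespace IsOverTheAirRound

variable {ι Ω E : Type*} [NormedAddCommGroup E] [InnerProductSpace ℝ E] [MeasurableSpace E]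
  {m mΩ : MeasurableSpace Ω} [StandardBorelSpace Ω] {hm : m ≤ mΩ} {μ : Measure Ω}
  [IsProbabilityMeasure μ] {h : ι → Ω → ℝ} {u : ι → Ω → E} {n g : Ω → E}
  {c σ V s : ℝ}

theorem memLp_gradient [CompleteSpace E] [Nonempty ι]
    (hr : IsOverTheAirRound m hm μ h u n g c σ V s) : MemLp g 2 μ :=
  ((hr.memLp_estimate (Classical.arbitrary ι)).condExp one_le_two).ae_eq
    (hr.condExp_estimate _)

theorem integral_norm_gradient_sq_le [CompleteSpace E] [Nonempty ι]
    (hr : IsOverTheAirRound m hm μ h u n g c σ V s) :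
    ∫ ω, ‖g ω‖ ^ 2 ∂μ ≤ V ^ 2 := by
  let i := Classical.arbitrary ι
  calc ∫ ω, ‖g ω‖ ^ 2 ∂μ ≤ ∫ _, V ^ 2 ∂μ := by
        refine integral_mono_ae (hr.memLp_gradient.integrable_norm_pow two_ne_zero)
          (integrable_const _) ?_
        filter_upwards [hr.condExp_estimate i, norm_sq_condExp_le hm (hr.memLp_estimate i),
          hr.condExp_estimate_sq_le i] with ω hg hjensen hV
        simpa only [hg] using hjensen.trans hV
    _ = V ^ 2 := by simp

variable [BorelSpace E]

theorem memLp_message (hr : IsOverTheAirRound m hm μ h u n g c σ V s) (i : ι) :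
    MemLp (fun ω ↦ h i ω • u i ω) 2 μ :=
  memLp_smul_of_condIndepFun (hr.condIndepFun_channel_estimate i) (hr.memLp_channel i)
    (hr.memLp_estimate i) (hr.condExp_channel_sq_le i) (hr.condExp_estimate_sq_le i)

theorem integral_norm_message_sq_le (hr : IsOverTheAirRound m hm μ h u n g c σ V s) (i : ι) :
    ∫ ω, ‖h i ω • u i ω‖ ^ 2 ∂μ ≤ σ * V ^ 2 :=
  integral_norm_smul_sq_le_of_condIndepFun (hr.condIndepFun_channel_estimate i) (hr.memLp_channel i)
    (hr.memLp_estimate i) (hr.condExp_channel_sq_le i) (hr.condExp_estimate_sq_le i)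

theorem memLp_sum_message [Fintype ι] (hr : IsOverTheAirRound m hm μ h u n g c σ V s) :
    MemLp (fun ω ↦ ∑ i, h i ω • u i ω) 2 μ :=
  memLp_finsetSum _ fun i _ ↦ hr.memLp_message i

theorem memLp_receivedSignal [Fintype ι] (hr : IsOverTheAirRound m hm μ h u n g c σ V s) :
    MemLp (receivedSignal h u n) 2 μ :=
  hr.memLp_sum_message.add hr.memLp_noise

variable [CompleteSpace E] [SecondCountableTopology E]

theorem condExp_message (hr : IsOverTheAirRound m hm μ h u n g c σ V s) (i : ι) :
    μ[fun ω ↦ h i ω • u i ω | m] =ᵐ[μ] fun ω ↦ c • g ω := by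
  have hprod := condExp_bilin_of_condIndepFun (.lsmul ℝ ℝ) (hr.condIndepFun_channel_estimate i)
    ((hr.memLp_channel i).integrable one_le_two) ((hr.memLp_estimate i).integrable one_le_two)
    ((hr.memLp_message i).integrable one_le_two)
  filter_upwards [hprod, hr.condExp_channel i, hr.condExp_estimate i] with ω hω hhω huω
  simpa [hhω, huω] using hω

theorem integral_inner_message (hr : IsOverTheAirRound m hm μ h u n g c σ V s) {i j : ι}
    (hij : i ≠ j) :
    ∫ ω, inner ℝ (h i ω • u i ω) (h j ω • u j ω) ∂μ = c ^ 2 * ∫ ω, ‖g ω‖ ^ 2 ∂μ := by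
  rw [integral_inner_of_condIndepFun (hr.condIndepFun_message hij) (hr.memLp_message i)
    (hr.memLp_message j), ← integral_const_mul]
  refine integral_congr_ae ?_
  filter_upwards [hr.condExp_message i, hr.condExp_message j] with ω hi hj
  rw [hi, hj, real_inner_smul_left, real_inner_smul_right, real_inner_self_eq_norm_sq]
  ring

theorem integral_inner_message_noise (hr : IsOverTheAirRound m hm μ h u n g c σ V s) (i : ι) :
    ∫ ω, inner ℝ (h i ω • u i ω) (n ω) ∂μ = 0 := by
  rw [integral_inner_of_condIndepFun (hr.condIndepFun_message_noise i) (hr.memLp_message i)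
    hr.memLp_noise]
  refine integral_eq_zero_of_ae ?_
  filter_upwards [hr.condExp_noise] with ω hω
  simp [hω]

variable [Fintype ι]

theorem condExp_receivedSignal (hr : IsOverTheAirRound m hm μ h u n g c σ V s) :
    μ[receivedSignal h u n | m] =ᵐ[μ] fun ω ↦ (Fintype.card ι * c) • g ω := by
  have hadd : μ[receivedSignal h u n | m]
      =ᵐ[μ] μ[fun ω ↦ ∑ i, h i ω • u i ω | m] + μ[n | m] :=
    condExp_add (hr.memLp_sum_message.integrable one_le_two)
      (hr.memLp_noise.integrable one_le_two) m
  filter_upwards [hadd, condExp_sum_apply (m := m) fun i (_ : i ∈ Finset.univ) ↦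
      (hr.memLp_message i).integrable one_le_two,
    ae_all_iff.2 hr.condExp_message, hr.condExp_noise] with ω hω hsum hmsg hnoise
  rw [hω, Pi.add_apply, hsum, hnoise]
  simp [hmsg, ← Nat.cast_smul_eq_nsmul ℝ, mul_smul]

theorem integral_norm_sum_message_sq_le (hr : IsOverTheAirRound m hm μ h u n g c σ V s) :
    ∫ ω, ‖∑ i, h i ω • u i ω‖ ^ 2 ∂μ ≤ Fintype.card ι * (σ * V ^ 2)
      + Fintype.card ι * (Fintype.card ι - 1) * (c ^ 2 * ∫ ω, ‖g ω‖ ^ 2 ∂μ) := by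
  classical
  have hrow : ∀ i, ∑ j, ∫ ω, inner ℝ (h i ω • u i ω) (h j ω • u j ω) ∂μ
      ≤ σ * V ^ 2 + (Fintype.card ι - 1) * (c ^ 2 * ∫ ω, ‖g ω‖ ^ 2 ∂μ) := by
    intro i
    have hoff : ∑ j ∈ Finset.univ.erase i, ∫ ω, inner ℝ (h i ω • u i ω) (h j ω • u j ω) ∂μ
        = (Fintype.card ι - 1) * (c ^ 2 * ∫ ω, ‖g ω‖ ^ 2 ∂μ) := by
      rw [Finset.sum_congr rfl fun j hj ↦
          hr.integral_inner_message (Finset.ne_of_mem_erase hj).symm, Finset.sum_const,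
        nsmul_eq_mul, Finset.cast_card_erase_of_mem (Finset.mem_univ i), Finset.card_univ]
    rw [← Finset.add_sum_erase _ _ (Finset.mem_univ i), hoff]
    gcongr
    simpa only [real_inner_self_eq_norm_sq] using hr.integral_norm_message_sq_le i
  rw [integral_norm_sum_sq _ fun i _ ↦ hr.memLp_message i]
  refine (Finset.sum_le_sum fun i _ ↦ hrow i).trans_eq ?_
  rw [Finset.sum_const, nsmul_eq_mul, Finset.card_univ]
  ring

theorem integral_norm_receivedSignal_sq_le (hr : IsOverTheAirRound m hm μ h u n g c σ V s) :
    ∫ ω, ‖receivedSignal h u n ω‖ ^ 2 ∂μ ≤ Fintype.card ι * (σ * V ^ 2) + s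
      + Fintype.card ι * (Fintype.card ι - 1) * c ^ 2 * ∫ ω, ‖g ω‖ ^ 2 ∂μ := by
  have hcross : ∫ ω, inner ℝ (∑ i, h i ω • u i ω) (n ω) ∂μ = 0 := by
    simp_rw [sum_inner]
    rw [integral_finsetSum _ fun i _ ↦
      integrable_inner_of_memLp_two (hr.memLp_message i) hr.memLp_noise]
    exact Finset.sum_eq_zero fun i _ ↦ hr.integral_inner_message_noise i
  simp only [receivedSignal]
  rw [integral_norm_add_sq hr.memLp_sum_message hr.memLp_noise, hcross]
  linarith [hr.integral_norm_sum_message_sq_le, hr.integral_noise_sq_le]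

theorem integral_inner_gradient_receivedSignal [Nonempty ι]
    (hr : IsOverTheAirRound m hm μ h u n g c σ V s) :
    ∫ ω, inner ℝ (g ω) (receivedSignal h u n ω) ∂μ
      = Fintype.card ι * c * ∫ ω, ‖g ω‖ ^ 2 ∂μ := by
  have hg : AEStronglyMeasurable[m] g μ :=
    stronglyMeasurable_condExp.aestronglyMeasurable.congr
      (hr.condExp_estimate (Classical.arbitrary ι))
  have hpull := condExp_bilin_of_aestronglyMeasurable_left (innerSL ℝ) hg
    (integrable_inner_of_memLp_two hr.memLp_gradient hr.memLp_receivedSignal)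
    (hr.memLp_receivedSignal.integrable one_le_two)
  rw [← integral_condExp hm, ← integral_const_mul]
  refine integral_congr_ae ?_
  filter_upwards [hpull, hr.condExp_receivedSignal] with ω hω hv
  refine hω.trans ?_
  rw [hv, innerSL_apply_apply, real_inner_smul_right, real_inner_self_eq_norm_sq]

end IsOverTheAirRound

section StochasticGradientDescent

variable {Ω E : Type*} [NormedAddCommGroup E] [InnerProductSpace ℝ E] [CompleteSpace E] {J : E → ℝ}
  {L Jstar γ : ℝ}

theorem apply_sub_smul_le (hJ : Differentiable ℝ J)
    (hLip : ∀ x y, ‖∇ J x - ∇ J y‖ ≤ L * ‖x - y‖) (γ : ℝ) (x w : E) :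
    J (x - γ • w) ≤ J x - γ * inner ℝ (∇ J x) w + L * γ ^ 2 / 2 * ‖w‖ ^ 2 := by
  have hdesc := le_add_inner_gradient_add_of_lipschitz hJ hLip x (-(γ • w))
  rw [inner_neg_right, real_inner_smul_right, norm_neg, norm_smul, mul_pow, Real.norm_eq_abs,
    sq_abs, ← sub_eq_add_neg] at hdesc
  linarith

variable {mΩ : MeasurableSpace Ω} {μ : Measure Ω}

theorem integrable_descent_majorant {x w : Ω → E} (hx : Integrable (fun ω ↦ J (x ω)) μ)
    (hgrad : MemLp (fun ω ↦ ∇ J (x ω)) 2 μ) (hw : MemLp w 2 μ) (L γ : ℝ) :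
    Integrable (fun ω ↦ J (x ω) - γ * inner ℝ (∇ J (x ω)) (w ω) + L * γ ^ 2 / 2 * ‖w ω‖ ^ 2) μ :=
  (hx.sub ((integrable_inner_of_memLp_two hgrad hw).const_mul γ)).add
    ((hw.integrable_norm_pow two_ne_zero).const_mul _)

theorem integrable_apply_sub_smul [IsFiniteMeasure μ] (hJ : Differentiable ℝ J)
    (hLip : ∀ x y, ‖∇ J x - ∇ J y‖ ≤ L * ‖x - y‖) (hlow : ∀ x, Jstar ≤ J x) {x w : Ω → E}
    (hxm : AEStronglyMeasurable x μ) (hx : Integrable (fun ω ↦ J (x ω)) μ)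
    (hgrad : MemLp (fun ω ↦ ∇ J (x ω)) 2 μ) (hw : MemLp w 2 μ) :
    Integrable (fun ω ↦ J (x ω - γ • w ω)) μ :=
  integrable_of_le_of_le
    (hJ.continuous.comp_aestronglyMeasurable (hxm.sub (hw.1.const_smul γ)))
    (.of_forall fun _ ↦ hlow _) (.of_forall fun _ ↦ apply_sub_smul_le hJ hLip _ _ _)
    (integrable_const Jstar) (integrable_descent_majorant hx hgrad hw L γ)

theorem integral_apply_sub_smul_le (hJ : Differentiable ℝ J)
    (hLip : ∀ x y, ‖∇ J x - ∇ J y‖ ≤ L * ‖x - y‖) {x w : Ω → E}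
    (hx : Integrable (fun ω ↦ J (x ω)) μ) (hx' : Integrable (fun ω ↦ J (x ω - γ • w ω)) μ)
    (hgrad : MemLp (fun ω ↦ ∇ J (x ω)) 2 μ) (hw : MemLp w 2 μ) :
    ∫ ω, J (x ω - γ • w ω) ∂μ ≤ ∫ ω, J (x ω) ∂μ - γ * ∫ ω, inner ℝ (∇ J (x ω)) (w ω) ∂μ
      + L * γ ^ 2 / 2 * ∫ ω, ‖w ω‖ ^ 2 ∂μ := by
  have hinner := (integrable_inner_of_memLp_two hgrad hw).const_mul γ
  have hsq := (hw.integrable_norm_pow two_ne_zero).const_mul (L * γ ^ 2 / 2)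
  have hlin : Integrable (fun ω ↦ J (x ω) - γ * inner ℝ (∇ J (x ω)) (w ω)) μ := hx.sub hinner
  rw [← integral_const_mul, ← integral_const_mul, ← integral_sub hx hinner,
    ← integral_add hlin hsq]
  exact integral_mono hx' (integrable_descent_majorant hx hgrad hw L γ)
    fun ω ↦ apply_sub_smul_le hJ hLip γ (x ω) (w ω)

variable {θ v : ℕ → Ω → E} {θ0 : E}

theorem integrable_apply_iterate [IsFiniteMeasure μ] (hJ : Differentiable ℝ J)
    (hLip : ∀ x y, ‖∇ J x - ∇ J y‖ ≤ L * ‖x - y‖) (hlow : ∀ x, Jstar ≤ J x)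
    (hθ0 : θ 0 = fun _ ↦ θ0) (hθ : ∀ k, θ (k + 1) = fun ω ↦ θ k ω - γ • v k ω)
    (hgrad : ∀ k, MemLp (fun ω ↦ ∇ J (θ k ω)) 2 μ) (hv : ∀ k, MemLp (v k) 2 μ) (k : ℕ) :
    Integrable (fun ω ↦ J (θ k ω)) μ := by
  have hθm : ∀ k, AEStronglyMeasurable (θ k) μ := by
    intro k
    induction k with
    | zero => rw [hθ0]; exact aestronglyMeasurable_const
    | succ k ih => rw [hθ]; exact ih.sub ((hv k).1.const_smul γ)
  induction k with
  | zero => rw [hθ0]; exact integrable_const _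
  | succ k ih =>
    rw [hθ]
    exact integrable_apply_sub_smul hJ hLip hlow (hθm k) ih (hgrad k) (hv k)

theorem sum_integral_norm_gradient_sq_le [IsProbabilityMeasure μ] {a b c : ℝ}
    (hJ : Differentiable ℝ J) (hL : 0 ≤ L)
    (hLip : ∀ x y, ‖∇ J x - ∇ J y‖ ≤ L * ‖x - y‖) (hlow : ∀ x, Jstar ≤ J x)
    (hθ0 : θ 0 = fun _ ↦ θ0) (hθ : ∀ k, θ (k + 1) = fun ω ↦ θ k ω - γ • v k ω)
    (hgrad : ∀ k, MemLp (fun ω ↦ ∇ J (θ k ω)) 2 μ) (hv : ∀ k, MemLp (v k) 2 μ)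
    (hinner : ∀ k, ∫ ω, inner ℝ (∇ J (θ k ω)) (v k ω) ∂μ = a * ∫ ω, ‖∇ J (θ k ω)‖ ^ 2 ∂μ)
    (hsq : ∀ k, ∫ ω, ‖v k ω‖ ^ 2 ∂μ ≤ b + c * ∫ ω, ‖∇ J (θ k ω)‖ ^ 2 ∂μ) (K : ℕ) :
    (γ * a - L * γ ^ 2 / 2 * c) * ∑ k ∈ Finset.range K, ∫ ω, ‖∇ J (θ k ω)‖ ^ 2 ∂μ
      ≤ J θ0 - Jstar + K * (L * γ ^ 2 / 2 * b) := by
  have hint := integrable_apply_iterate hJ hLip hlow hθ0 hθ hgrad hv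
  have hstep : ∀ k, (γ * a - L * γ ^ 2 / 2 * c) * ∫ ω, ‖∇ J (θ k ω)‖ ^ 2 ∂μ
      ≤ (∫ ω, J (θ k ω) ∂μ - ∫ ω, J (θ (k + 1) ω) ∂μ) + L * γ ^ 2 / 2 * b := by
    intro k
    have hnext := hint (k + 1)
    simp only [hθ k] at hnext ⊢
    have hdesc := integral_apply_sub_smul_le hJ hLip (hint k) hnext (hgrad k) (hv k)
    have hnoise := mul_le_mul_of_nonneg_left (hsq k) (by positivity : 0 ≤ L * γ ^ 2 / 2)
    rw [hinner k] at hdesc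
    linarith
  have hinit : ∫ ω, J (θ 0 ω) ∂μ = J θ0 := by simp [hθ0]
  have hfinal : Jstar ≤ ∫ ω, J (θ K ω) ∂μ := by
    simpa using integral_mono (integrable_const Jstar) (hint K) fun ω ↦ hlow (θ K ω)
  calc (γ * a - L * γ ^ 2 / 2 * c) * ∑ k ∈ Finset.range K, ∫ ω, ‖∇ J (θ k ω)‖ ^ 2 ∂μ
      ≤ ∑ k ∈ Finset.range K,
          ((∫ ω, J (θ k ω) ∂μ - ∫ ω, J (θ (k + 1) ω) ∂μ) + L * γ ^ 2 / 2 * b) := by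
        rw [Finset.mul_sum]
        exact Finset.sum_le_sum fun k _ ↦ hstep k
    _ = (J θ0 - ∫ ω, J (θ K ω) ∂μ) + K * (L * γ ^ 2 / 2 * b) := by
        rw [Finset.sum_add_distrib, Finset.sum_range_sub' (fun k ↦ ∫ ω, J (θ k ω) ∂μ), hinit]
        simp
    _ ≤ J θ0 - Jstar + K * (L * γ ^ 2 / 2 * b) := by gcongr

end StochasticGradientDescent

theorem add_one_mul_sq_mul_le_of_descent {N c L α S D T K : ℝ} (hN : 1 ≤ N) (hc : 0 ≤ c)
    (hα : 0 < α) (hαL : L * α * c ≤ 1) (hS : 0 ≤ S) (hT : 0 ≤ T) (hK : 0 ≤ K)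
    (hdesc : (α / N * (N * c) - L * (α / N) ^ 2 / 2 * (N * (N - 1) * c ^ 2)) * S
      ≤ D + K * (L * (α / N) ^ 2 / 2 * T)) :
    (N + 1) * c ^ 2 * S ≤ 2 * N * c * D / α + K * (T / N) := by
  have hN0 : 0 < N := one_pos.trans_le hN
  have hN1 : 0 ≤ N - 1 := sub_nonneg.2 hN
  have hscaled := mul_le_mul_of_nonneg_left hdesc (by positivity : 0 ≤ 2 * N * c / α)
  calc (N + 1) * c ^ 2 * S = 2 * N * c ^ 2 * S - 1 * ((N - 1) * c ^ 2 * S) := by ring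
    _ ≤ 2 * N * c ^ 2 * S - L * α * c * ((N - 1) * c ^ 2 * S) := by gcongr
    _ = 2 * N * c / α
          * ((α / N * (N * c) - L * (α / N) ^ 2 / 2 * (N * (N - 1) * c ^ 2)) * S) := by
        field_simp
    _ ≤ 2 * N * c / α * (D + K * (L * (α / N) ^ 2 / 2 * T)) := hscaled
    _ = 2 * N * c * D / α + L * α * c * (K * (T / N)) := by field_simp
    _ ≤ 2 * N * c * D / α + 1 * (K * (T / N)) := by gcongr
    _ = 2 * N * c * D / α + K * (T / N) := by ring

section OverTheAirGradientDescent

variable {E : Type*} [NormedAddCommGroup E] [InnerProductSpace ℝ E] [CompleteSpace E]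
  [MeasurableSpace E] [BorelSpace E] [SecondCountableTopology E] {N : ℕ} {Ω : Type*}
  {mΩ : MeasurableSpace Ω} [StandardBorelSpace Ω] {μ : Measure Ω} [IsProbabilityMeasure μ]
  {c σ V s α L : ℝ} {J : E → ℝ} {Jstar : ℝ} {m : ℕ → MeasurableSpace Ω} {hm : ∀ k, m k ≤ mΩ}
  {h : ℕ → Fin N → Ω → ℝ} {u : ℕ → Fin N → Ω → E} {n θ : ℕ → Ω → E} {θ0 : E}

theorem add_one_mul_sq_mul_sum_integral_norm_gradient_sq_le (hN : 0 < N) (hc : 0 < c)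
    (hσ : 0 ≤ σ) (hL : 0 < L) (hα : 0 < α) (hαL : α ≤ 1 / (c * L)) (hJ : Differentiable ℝ J)
    (hLip : ∀ x y, ‖∇ J x - ∇ J y‖ ≤ L * ‖x - y‖) (hlow : ∀ x, Jstar ≤ J x)
    (hround : ∀ k, IsOverTheAirRound (m k) (hm k) μ (h k) (u k) (n k) (fun ω ↦ ∇ J (θ k ω)) c σ V s)
    (hθ0 : θ 0 = fun _ ↦ θ0)
    (hθ : ∀ k, θ (k + 1) = fun ω ↦ θ k ω - (α / (N : ℝ)) • receivedSignal (h k) (u k) (n k) ω)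
    (K : ℕ) :
    (N + 1) * c ^ 2 * ∑ k ∈ Finset.range K, ∫ ω, ‖∇ J (θ k ω)‖ ^ 2 ∂μ
      ≤ 2 * N * c * (J θ0 - Jstar) / α + K * ((N * (σ * V ^ 2) + s) / N) := by
  have : Nonempty (Fin N) := Fin.pos_iff_nonempty.1 hN
  have hs : 0 ≤ s :=
    (integral_nonneg fun _ ↦ sq_nonneg _).trans (hround 0).integral_noise_sq_le
  have hdesc := sum_integral_norm_gradient_sq_le hJ hL.le hLip hlow hθ0 hθ
    (fun k ↦ (hround k).memLp_gradient) (fun k ↦ (hround k).memLp_receivedSignal)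
    (fun k ↦ (hround k).integral_inner_gradient_receivedSignal)
    (fun k ↦ (hround k).integral_norm_receivedSignal_sq_le) K
  rw [Fintype.card_fin] at hdesc
  refine add_one_mul_sq_mul_le_of_descent (by exact_mod_cast hN) hc.le hα ?_
    (Finset.sum_nonneg fun _ _ ↦ integral_nonneg fun _ ↦ sq_nonneg _) (by positivity)
    K.cast_nonneg hdesc
  rw [le_div_iff₀ (mul_pos hc hL)] at hαL
  linarith

/- The weight `w` interpolates between the descent bound (`w → ∞`) and Jensen's bound `V ^ 2`
(`w → 0`); the paper's estimate is the case `w = M`. -/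
theorem overTheAir_convergence_general_general (hN : 0 < N) (hc : 0 < c)
    (hσ : 0 ≤ σ) (hL : 0 < L) (hα : 0 < α) (hαL : α ≤ 1 / (c * L)) (hJ : Differentiable ℝ J)
    (hLip : ∀ x y, ‖∇ J x - ∇ J y‖ ≤ L * ‖x - y‖) (hlow : ∀ x, Jstar ≤ J x)
    (hround : ∀ k, IsOverTheAirRound (m k) (hm k) μ (h k) (u k) (n k) (fun ω ↦ ∇ J (θ k ω)) c σ V s)
    (hθ0 : θ 0 = fun _ ↦ θ0)
    (hθ : ∀ k, θ (k + 1) = fun ω ↦ θ k ω - (α / (N : ℝ)) • receivedSignal (h k) (u k) (n k) ω)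
    {w Λ : ℝ} (hw : 0 < w) (hΛ : Λ = w * ((N : ℝ) + 1) * c ^ 2 + σ) (K : ℕ) (hK : 1 ≤ K) :
    (1 / (K : ℝ)) * ∑ k ∈ Finset.range K, ∫ ω, ‖∇ J (θ k ω)‖ ^ 2 ∂μ
      ≤ 2 * w * N * c * (J θ0 - Jstar) / (α * K * Λ) + w * σ * V ^ 2 / Λ + σ * V ^ 2 / Λ
        + w * s / (N * Λ) := by
  have : Nonempty (Fin N) := Fin.pos_iff_nonempty.1 hN
  have hN0 : (0 : ℝ) < N := by exact_mod_cast hN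
  have hK0 : (0 : ℝ) < K := by exact_mod_cast hK
  have hΛ0 : 0 < Λ := by rw [hΛ]; positivity
  set S := ∑ k ∈ Finset.range K, ∫ ω, ‖∇ J (θ k ω)‖ ^ 2 ∂μ
  have hdescent : (N + 1) * c ^ 2 * S
      ≤ 2 * N * c * (J θ0 - Jstar) / α + K * ((N * (σ * V ^ 2) + s) / N) :=
    add_one_mul_sq_mul_sum_integral_norm_gradient_sq_le hN hc hσ hL hα hαL hJ hLip hlow hround
      hθ0 hθ K
  have htrivial : S ≤ K * V ^ 2 := by
    simpa using Finset.sum_le_card_nsmul (Finset.range K) _ (V ^ 2)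
      fun k _ ↦ (hround k).integral_norm_gradient_sq_le
  calc 1 / K * S = Λ * S / (K * Λ) := by field_simp
    _ = (w * ((N + 1) * c ^ 2 * S) + σ * S) / (K * Λ) := by rw [hΛ]; ring
    _ ≤ (w * (2 * N * c * (J θ0 - Jstar) / α + K * ((N * (σ * V ^ 2) + s) / N))
          + σ * (K * V ^ 2)) / (K * Λ) := by gcongr
    _ = 2 * w * N * c * (J θ0 - Jstar) / (α * K * Λ) + w * σ * V ^ 2 / Λ + σ * V ^ 2 / Λ
          + w * s / (N * Λ) := by field_simp; ring

end OverTheAirGradientDescent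

theorem condIndepFun_finset_comp_of_iCondIndepFun {Ω ι γ δ : Type*} {β : ι → Type*}
    [∀ i, MeasurableSpace (β i)] [MeasurableSpace γ] [MeasurableSpace δ]
    {m mΩ : MeasurableSpace Ω} [StandardBorelSpace Ω] {hm : m ≤ mΩ} {μ : Measure Ω}
    [IsFiniteMeasure μ] {f : ∀ i, Ω → β i} (hf : iCondIndepFun m hm f μ)
    (hfm : ∀ i, AEMeasurable (f i) μ) {S T : Finset ι} (hST : Disjoint S T)
    {φ : (∀ i : S, β i) → γ} {ψ : (∀ i : T, β i) → δ} (hφ : Measurable φ) (hψ : Measurable ψ) :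
    CondIndepFun m hm (fun ω ↦ φ fun i ↦ f i ω) (fun ω ↦ ψ fun i ↦ f i ω) μ :=
  (Kernel.iIndepFun.indepFun_finset₀ S T hST hf
    fun i ↦ by rw [condExpKernel_comp_trim hm]; exact hfm i).comp hφ hψ

/-- The batch average `(1 / M) ∑ m, X m`, which is what a single agent transmits. -/
noncomputable def batchMean {Ω E : Type*} [AddCommMonoid E] [SMul ℝ E] {M : ℕ} (X : Fin M → Ω → E)
    (ω : Ω) : E :=
  (1 / (M : ℝ)) • ∑ m, X m ω

section BatchMean

variable {Ω E : Type*} [NormedAddCommGroup E] [NormedSpace ℝ E] {M : ℕ}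

theorem batchMean_const (hM : 0 < M) (x : E) (ω : Ω) :
    batchMean (fun (_ : Fin M) (_ : Ω) ↦ x) ω = x := by
  simp [batchMean, ← Nat.cast_smul_eq_nsmul ℝ, smul_smul, hM.ne']

theorem norm_batchMean_sq_le (X : Fin M → Ω → E) (ω : Ω) :
    ‖batchMean X ω‖ ^ 2 ≤ batchMean (fun j ω' ↦ ‖X j ω'‖ ^ 2) ω := by
  have hsum : ‖∑ j, X j ω‖ ^ 2 ≤ M * ∑ j, ‖X j ω‖ ^ 2 :=
    calc ‖∑ j, X j ω‖ ^ 2 ≤ (∑ j, ‖X j ω‖) ^ 2 := by gcongr; exact norm_sum_le _ _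
      _ ≤ M * ∑ j, ‖X j ω‖ ^ 2 := by
        simpa using sq_sum_le_card_mul_sum_sq (s := Finset.univ) (f := fun j ↦ ‖X j ω‖)
  calc ‖batchMean X ω‖ ^ 2 = (1 / (M : ℝ)) ^ 2 * ‖∑ j, X j ω‖ ^ 2 := by
        rw [batchMean, norm_smul, mul_pow, Real.norm_eq_abs, sq_abs]
    _ ≤ (1 / (M : ℝ)) ^ 2 * (M * ∑ j, ‖X j ω‖ ^ 2) := by gcongr
    _ = batchMean (fun j ω' ↦ ‖X j ω'‖ ^ 2) ω := by
        rcases M.eq_zero_or_pos with rfl | hM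
        · simp [batchMean]
        · rw [batchMean, smul_eq_mul]; field_simp

variable {m mΩ : MeasurableSpace Ω} {μ : Measure Ω} {X : Fin M → Ω → E}

theorem integrable_batchMean (hX : ∀ j, Integrable (X j) μ) : Integrable (batchMean X) μ :=
  (integrable_finsetSum _ fun j _ ↦ hX j).smul (1 / (M : ℝ))

theorem memLp_batchMean (hX : ∀ j, MemLp (X j) 2 μ) : MemLp (batchMean X) 2 μ :=
  (memLp_finsetSum Finset.univ fun j _ ↦ hX j).const_smul (1 / (M : ℝ))

theorem condExp_batchMean [CompleteSpace E] (hX : ∀ j, Integrable (X j) μ) :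
    μ[batchMean X | m] =ᵐ[μ] batchMean fun j ↦ μ[X j | m] := by
  have hsmul : μ[batchMean X | m] =ᵐ[μ] (1 / (M : ℝ)) • μ[fun ω ↦ ∑ j, X j ω | m] :=
    condExp_smul _ _ _
  filter_upwards [hsmul, condExp_sum_apply (m := m) fun j (_ : j ∈ Finset.univ) ↦ hX j]
    with ω hω hsum
  rw [hω, Pi.smul_apply, hsum, batchMean]

theorem condExp_batchMean_eq [CompleteSpace E] {g : Ω → E} (hM : 0 < M)
    (hX : ∀ j, Integrable (X j) μ) (hEX : ∀ j, μ[X j | m] =ᵐ[μ] g) :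
    μ[batchMean X | m] =ᵐ[μ] g := by
  filter_upwards [condExp_batchMean (m := m) hX, ae_all_iff.2 hEX] with ω hω hg
  rw [hω, ← batchMean_const hM (g ω) ω]
  simp only [batchMean, hg]

theorem condExp_norm_batchMean_sq_le {V : ℝ} (hM : 0 < M) (hX : ∀ j, MemLp (X j) 2 μ)
    (hVX : ∀ j, ∀ᵐ ω ∂μ, (μ[fun ω' ↦ ‖X j ω'‖ ^ 2 | m]) ω ≤ V ^ 2) :
    ∀ᵐ ω ∂μ, (μ[fun ω' ↦ ‖batchMean X ω'‖ ^ 2 | m]) ω ≤ V ^ 2 := by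
  have hsq : ∀ j, Integrable (fun ω ↦ ‖X j ω‖ ^ 2) μ :=
    fun j ↦ (hX j).integrable_norm_pow two_ne_zero
  have hmono : μ[fun ω ↦ ‖batchMean X ω‖ ^ 2 | m] ≤ᵐ[μ] μ[batchMean fun j ω ↦ ‖X j ω‖ ^ 2 | m] :=
    condExp_mono ((memLp_batchMean hX).integrable_norm_pow two_ne_zero)
      (integrable_batchMean hsq) (.of_forall fun ω ↦ norm_batchMean_sq_le X ω)
  filter_upwards [hmono, condExp_batchMean (m := m) hsq, ae_all_iff.2 hVX] with ω hle hω hV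
  rw [hω] at hle
  refine hle.trans (le_of_le_of_eq ?_ (batchMean_const hM (V ^ 2) ω))
  simp only [batchMean, smul_eq_mul]
  gcongr with j
  exact hV j

end BatchMean

/-- The indices of the members `X i m` of `otaFam h X n`, i.e. of the samples of agent `i`. -/
def batchBlock {N : ℕ} (M : ℕ) (i : Fin N) : Finset (Fin N ⊕ (Fin N × Fin M) ⊕ Unit) :=
  Finset.univ.image fun j ↦ Sum.inr (Sum.inl (i, j))

/-- The indices of the members `h i` and `X i m` of `otaFam h X n`, from which the message
`h i • batchMean (X i)` of agent `i` is computed. -/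
def messageBlock {N : ℕ} (M : ℕ) (i : Fin N) : Finset (Fin N ⊕ (Fin N × Fin M) ⊕ Unit) :=
  insert (Sum.inl i) (batchBlock M i)

theorem sample_mem_batchBlock {N M : ℕ} (i : Fin N) (j : Fin M) :
    Sum.inr (Sum.inl (i, j)) ∈ batchBlock M i :=
  Finset.mem_image_of_mem _ (Finset.mem_univ j)

theorem channel_mem_messageBlock {N : ℕ} (M : ℕ) (i : Fin N) : Sum.inl i ∈ messageBlock M i :=
  Finset.mem_insert_self _ _

theorem sample_mem_messageBlock {N M : ℕ} (i : Fin N) (j : Fin M) :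
    Sum.inr (Sum.inl (i, j)) ∈ messageBlock M i :=
  Finset.mem_insert_of_mem (sample_mem_batchBlock i j)

theorem disjoint_messageBlock {N M : ℕ} {i i' : Fin N} (hii' : i ≠ i') :
    Disjoint (messageBlock M i) (messageBlock M i') := by
  simp [messageBlock, batchBlock, Finset.disjoint_left, hii', hii'.symm]

section OverTheAirFamily

variable {d N M : ℕ} {Ω : Type*} {m mΩ : MeasurableSpace Ω} {μ : Measure Ω} {h : Fin N → Ω → ℝ}
  {X : Fin N → Fin M → Ω → EuclideanSpace ℝ (Fin d)} {n : Ω → EuclideanSpace ℝ (Fin d)}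

theorem aemeasurable_otaFam (hh : ∀ i, AEMeasurable (h i) μ) (hX : ∀ i j, AEMeasurable (X i j) μ)
    (hn : AEMeasurable n μ) (a : Fin N ⊕ (Fin N × Fin M) ⊕ Unit) :
    AEMeasurable (otaFam h X n a) μ := by
  rcases a with i | ⟨i, j⟩ | _
  · exact (hh i).prodMk aemeasurable_const
  · exact aemeasurable_const.prodMk (hX i j)
  · exact aemeasurable_const.prodMk hn

variable [StandardBorelSpace Ω] {hm : m ≤ mΩ} [IsFiniteMeasure μ]

theorem condIndepFun_channel_batchMean (hind : iCondIndepFun m hm (otaFam h X n) μ)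
    (hmeas : ∀ a, AEMeasurable (otaFam h X n a) μ) (i : Fin N) :
    CondIndepFun m hm (h i) (batchMean (X i)) μ :=
  condIndepFun_finset_comp_of_iCondIndepFun hind hmeas (S := {Sum.inl i}) (T := batchBlock M i)
    (φ := fun p ↦ (p ⟨_, Finset.mem_singleton_self _⟩).1)
    (ψ := batchMean fun j p ↦ (p ⟨_, sample_mem_batchBlock i j⟩).2)
    (by simp [batchBlock]) (by fun_prop) (by unfold batchMean; fun_prop)

theorem measurable_message_of_block (i : Fin N) :
    Measurable fun p : messageBlock M i → ℝ × EuclideanSpace ℝ (Fin d) ↦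
      (p ⟨_, channel_mem_messageBlock M i⟩).1 •
        batchMean (fun j (q : messageBlock M i → ℝ × EuclideanSpace ℝ (Fin d)) ↦
          (q ⟨_, sample_mem_messageBlock i j⟩).2) p := by
  unfold batchMean
  fun_prop

theorem condIndepFun_message_message (hind : iCondIndepFun m hm (otaFam h X n) μ)
    (hmeas : ∀ a, AEMeasurable (otaFam h X n a) μ) {i j : Fin N} (hij : i ≠ j) :
    CondIndepFun m hm (fun ω ↦ h i ω • batchMean (X i) ω) (fun ω ↦ h j ω • batchMean (X j) ω) μ :=
  condIndepFun_finset_comp_of_iCondIndepFun hind hmeas (disjoint_messageBlock hij)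
    (measurable_message_of_block i) (measurable_message_of_block j)

theorem condIndepFun_message_noise (hind : iCondIndepFun m hm (otaFam h X n) μ)
    (hmeas : ∀ a, AEMeasurable (otaFam h X n a) μ) (i : Fin N) :
    CondIndepFun m hm (fun ω ↦ h i ω • batchMean (X i) ω) n μ :=
  condIndepFun_finset_comp_of_iCondIndepFun hind hmeas (T := {Sum.inr (Sum.inr ())})
    (ψ := fun p ↦ (p ⟨_, Finset.mem_singleton_self _⟩).2)
    (by simp [messageBlock, batchBlock]) (measurable_message_of_block i) (by fun_prop)

theorem isOverTheAirRound_of_iCondIndepFun_otaFam {g : Ω → EuclideanSpace ℝ (Fin d)}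
    {c σ V s : ℝ} (hM : 0 < M) (hh2 : ∀ i, MemLp (h i) 2 μ) (hX2 : ∀ i j, MemLp (X i j) 2 μ)
    (hn2 : MemLp n 2 μ) (hind : iCondIndepFun m hm (otaFam h X n) μ)
    (hhind : ∀ i, Indep (MeasurableSpace.comap (h i) inferInstance) m μ)
    (hnind : Indep (MeasurableSpace.comap n inferInstance) m μ)
    (hEh : ∀ i, ∫ ω, h i ω ∂μ = c) (hEh2 : ∀ i, ∫ ω, h i ω ^ 2 ∂μ ≤ σ)
    (hEn : ∫ ω, n ω ∂μ = 0) (hVn : ∫ ω, ‖n ω‖ ^ 2 ∂μ ≤ s) (hEX : ∀ i j, μ[X i j | m] =ᵐ[μ] g)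
    (hVX : ∀ i j, ∀ᵐ ω ∂μ, (μ[fun ω' ↦ ‖X i j ω'‖ ^ 2 | m]) ω ≤ V ^ 2) :
    IsOverTheAirRound m hm μ h (fun i ↦ batchMean (X i)) n g c σ V s := by
  have hmeas := aemeasurable_otaFam (fun i ↦ (hh2 i).1.aemeasurable)
    (fun i j ↦ (hX2 i j).1.aemeasurable) hn2.1.aemeasurable
  exact
  { memLp_channel := hh2
    memLp_estimate := fun i ↦ memLp_batchMean (hX2 i)
    memLp_noise := hn2
    condIndepFun_channel_estimate := condIndepFun_channel_batchMean hind hmeas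
    condIndepFun_message := fun _ _ hij ↦ condIndepFun_message_message hind hmeas hij
    condIndepFun_message_noise := condIndepFun_message_noise hind hmeas
    condExp_channel := fun i ↦ by
      simpa only [id, hEh i] using
        condExp_comp_of_indep hm (hh2 i).1.aemeasurable stronglyMeasurable_id (hhind i)
    condExp_channel_sq_le := fun i ↦
      (condExp_comp_of_indep (φ := fun x : ℝ ↦ x ^ 2) hm (hh2 i).1.aemeasurable (by fun_prop)
        (hhind i)).mono fun _ hω ↦ hω.trans_le (hEh2 i)
    condExp_estimate := fun i ↦
      condExp_batchMean_eq hM (fun j ↦ (hX2 i j).integrable one_le_two) (hEX i)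
    condExp_estimate_sq_le := fun i ↦ condExp_norm_batchMean_sq_le hM (hX2 i) (hVX i)
    condExp_noise := by
      simpa only [id, hEn, Pi.zero_def] using
        condExp_comp_of_indep hm hn2.1.aemeasurable stronglyMeasurable_id hnind
    integral_noise_sq_le := hVn }

end OverTheAirFamily

/-- Theorem 2 of the paper: convergence without the channel-statistics
condition.  If `0 < α ≤ 1/(m_h L)` and `Λ' = M(N+1)m_h² + σ_h²`, then for every `K ≥ 1`,
`(1/K) Σ_{k<K} E[‖∇J(θ^k)‖²] ≤ 2 M N m_h (J(θ⁰) - J*)/(α K Λ') + M σ_h² V²/Λ'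
  + σ_h² V²/Λ' + M σ̄²/(N Λ')`. -/
theorem overTheAir_convergence_general
    {d : ℕ} (hd : 1 ≤ d) {N M : ℕ} (hN : 0 < N) (hM : 0 < M)
    {Ω : Type*} [mΩ : MeasurableSpace Ω] [StandardBorelSpace Ω] [Nonempty Ω]
    (μ : Measure Ω) [IsProbabilityMeasure μ]
    (m_h σ_h2 V σbar2 α L : ℝ)
    (hm : 0 < m_h) (hσh : 0 ≤ σ_h2) (hV : 0 ≤ V) (hσbar : 0 ≤ σbar2)
    (hL : 0 < L) (hα : 0 < α) (hαL : α ≤ 1 / (m_h * L))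
    (J : EuclideanSpace ℝ (Fin d) → ℝ) (hJ : Differentiable ℝ J)
    (hLip : ∀ x y : EuclideanSpace ℝ (Fin d),
      ‖gradient J x - gradient J y‖ ≤ L * ‖x - y‖)
    (Jstar : ℝ) (hJstar : IsGLB (Set.range J) Jstar)
    (𝓕 : Filtration ℕ mΩ)
    (h : ℕ → Fin N → Ω → ℝ)
    (X : ℕ → Fin N → Fin M → Ω → EuclideanSpace ℝ (Fin d))
    (n : ℕ → Ω → EuclideanSpace ℝ (Fin d))
    (θ : ℕ → Ω → EuclideanSpace ℝ (Fin d))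
    (θ0 : EuclideanSpace ℝ (Fin d)) (hθ0 : θ 0 = fun _ => θ0)
    (v : ℕ → Ω → EuclideanSpace ℝ (Fin d))
    (hv : ∀ k, v k = fun ω =>
      (∑ i : Fin N, h k i ω • ((1 / (M : ℝ)) • ∑ m : Fin M, X k i m ω)) + n k ω)
    (hθ : ∀ k, θ (k + 1) = fun ω => θ k ω - (α / (N : ℝ)) • v k ω)
    (hθmeas : ∀ k, Measurable[𝓕 k] (θ k))
    (hh2 : ∀ k i, MemLp (h k i) 2 μ)
    (hX2 : ∀ k i m, MemLp (X k i m) 2 μ)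
    (hn2 : ∀ k, MemLp (n k) 2 μ)
    (hcondind : ∀ k, iCondIndepFun (𝓕 k) (𝓕.le k)
      (otaFam (h k) (X k) (n k)) μ)
    (hhind : ∀ k i, Indep (MeasurableSpace.comap (h k i) inferInstance) (𝓕 k) μ)
    (hnind : ∀ k, Indep (MeasurableSpace.comap (n k) inferInstance) (𝓕 k) μ)
    (hEh : ∀ k i, ∫ ω, h k i ω ∂μ = m_h)
    (hEh2 : ∀ k i, ∫ ω, (h k i ω) ^ 2 ∂μ = σ_h2)
    (hEn : ∀ k, ∫ ω, n k ω ∂μ = 0)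
    (hVn : ∀ k, ∫ ω, ‖n k ω‖ ^ 2 ∂μ ≤ σbar2)
    (hEX : ∀ k i m, μ[X k i m | 𝓕 k] =ᵐ[μ] fun ω => gradient J (θ k ω))
    (hVX : ∀ k i m, ∀ᵐ ω ∂μ, (μ[fun ω' => ‖X k i m ω'‖ ^ 2 | 𝓕 k]) ω ≤ V ^ 2)
    (Λ' : ℝ) (hΛ' : Λ' = (M : ℝ) * ((N : ℝ) + 1) * m_h ^ 2 + σ_h2) :
    ∀ K : ℕ, 1 ≤ K →
      (1 / (K : ℝ)) * ∑ k ∈ Finset.range K, ∫ ω, ‖gradient J (θ k ω)‖ ^ 2 ∂μ ≤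
        2 * (M : ℝ) * (N : ℝ) * m_h * (J θ0 - Jstar) / (α * (K : ℝ) * Λ')
          + (M : ℝ) * σ_h2 * V ^ 2 / Λ'
          + σ_h2 * V ^ 2 / Λ'
          + (M : ℝ) * σbar2 / ((N : ℝ) * Λ') :=
  overTheAir_convergence_general_general hN hm hσh hL hα hαL hJ hLip (fun x ↦ hJstar.1 ⟨x, rfl⟩)
    (fun k ↦ isOverTheAirRound_of_iCondIndepFun_otaFam hM (hh2 k) (hX2 k) (hn2 k) (hcondind k)
      (hhind k) (hnind k) (hEh k) (fun i ↦ (hEh2 k i).le) (hEn k) (hVn k) (hEX k) (hVX k))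
    hθ0 (fun k ↦ (hθ k).trans (by rw [hv]; rfl)) (Nat.cast_pos.2 hM) hΛ'
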